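/- arXiv:math/0310044 — 4 statements merged into one kernel-verified Lean document; each statement's English description precedes it below -/
import Mathlib

section
/- Let k ≥ 1 be an integer and M < ∞. Then there exists a constant C = C(k, M) < ∞ with the following property. Let η be a random variable with values in the nonnegative integers satisfying E[η^k] ≤ M, and let (ξ_j)_{j≥1} be an i.i.d. sequence of random variables with values in {−1, 0, 1}, with the whole sequence independent of η. Set G = Σ_{j=1}^{η} ξ_j − E[η] · E[ξ_1]. Then E[|G|^k] ≤ C · P(ξ_1 ≠ 0). -/
open MeasureTheory ProbabilityTheory

lemma aux_lint {Ω : Type} [MeasureSpace Ω] [IsProbabilityMeasure (ℙ : Measure Ω)]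
    (k : ℕ) (hk : 1 ≤ k) (η : Ω → ℕ) (ξ : ℕ → Ω → ℝ) (hη : Measurable η)
    (hξ : ∀ j, Measurable (ξ j)) (hid : ∀ j, Measure.map (ξ j) ℙ = Measure.map (ξ 0) ℙ)
    (hind : IndepFun η (fun ω => fun j => ξ j ω) ℙ) :
    Measurable (fun ω => (η ω : ENNReal) ^ (k-1) *
      ∑ j ∈ Finset.range (η ω), ENNReal.ofReal |ξ j ω|) ∧
    ∫⁻ ω, (η ω : ENNReal) ^ (k-1) * ∑ j ∈ Finset.range (η ω), ENNReal.ofReal |ξ j ω| =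
      (∫⁻ ω, (η ω : ENNReal) ^ k) * ∫⁻ ω, ENNReal.ofReal |ξ 0 ω| := by
  let a : ℕ → ℕ → ENNReal := fun j n => if j ∈ Finset.range n then (n : ENNReal) ^ (k-1) else 0
  have hA : ∀ j, Measurable (fun ω => a j (η ω)) := fun j =>
    (measurable_of_countable (a j)).comp hη
  have hB : ∀ j, Measurable (fun ω => ENNReal.ofReal |ξ j ω|) := fun j =>
    ENNReal.measurable_ofReal.comp (measurable_norm.comp (hξ j))
  have hsum : ∀ n : ℕ, ∀ b : ℕ → ENNReal,
      (n : ENNReal) ^ (k-1) * ∑ j ∈ Finset.range n, b j = ∑' j, a j n * b j := by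
    intro n b
    rw [tsum_eq_sum (s := Finset.range n), Finset.mul_sum]
    · exact Finset.sum_congr rfl fun j hj => by simp only [a, if_pos hj]
    · intro j hj
      simp only [a, if_neg hj, zero_mul]
  have hpow : ∀ n : ℕ, (n : ENNReal) ^ k = ∑' j, a j n := by
    intro n
    have := hsum n (fun _ => 1)
    simp only [mul_one] at this
    rw [← this]
    obtain ⟨m, rfl⟩ : ∃ m, k = m + 1 := ⟨k - 1, by omega⟩
    simp [pow_succ]
  simp_rw [hsum, hpow]
  refine ⟨Measurable.tsum fun j => (hA j).mul (hB j), ?_⟩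
  have hAB : ∀ j, AEMeasurable (fun ω => a j (η ω) * ENNReal.ofReal |ξ j ω|) ℙ := fun j =>
    ((hA j).mul (hB j)).aemeasurable
  rw [lintegral_tsum hAB,
    lintegral_tsum fun j => (hA j).aemeasurable, ← ENNReal.tsum_mul_right]
  congr 1
  ext j
  have hi : IndepFun (fun ω => a j (η ω)) (fun ω => ENNReal.ofReal |ξ j ω|) ℙ :=
    hind.comp (φ := a j) (ψ := fun x : ℕ → ℝ => ENNReal.ofReal |x j|)
      (measurable_of_countable (a j))
      (ENNReal.measurable_ofReal.comp (measurable_norm.comp (measurable_pi_apply j)))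
  have h1 := lintegral_mul_eq_lintegral_mul_lintegral_of_indepFun (hA j) (hB j) hi
  simp only [Pi.mul_apply] at h1
  rw [h1]
  congr 1
  have hm : Measurable (fun x : ℝ => ENNReal.ofReal |x|) :=
    ENNReal.measurable_ofReal.comp measurable_norm
  rw [← lintegral_map hm (hξ j), ← lintegral_map hm (hξ 0), hid j]

/-- Lemma 4.7 (abstract form): for every `k ≥ 1` and `M < ∞` there is a constant
`C = C(k, M)` such that for any nonnegative-integer-valued random variable `η`
with `E[η^k] ≤ M` and any i.i.d. sequence `(ξ_j)` with values in `{-1, 0, 1}`,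
independent of `η`, the centered random sum
`G = Σ_{j=1}^{η} ξ_j − E[η]·E[ξ_1]` satisfies `E[|G|^k] ≤ C·P(ξ_1 ≠ 0)`. -/
theorem centered_random_sum_moment_bound (k : ℕ) (hk : 1 ≤ k) (M : ℝ) :
    ∃ C : ℝ, ∀ (Ω : Type) [MeasureSpace Ω] [IsProbabilityMeasure (ℙ : Measure Ω)]
      (η : Ω → ℕ) (ξ : ℕ → Ω → ℝ),
      Measurable η →
      (∀ j, Measurable (ξ j)) →
      (∀ j ω, ξ j ω ∈ ({-1, 0, 1} : Set ℝ)) →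
      iIndepFun ξ ℙ →
      (∀ j, Measure.map (ξ j) ℙ = Measure.map (ξ 0) ℙ) →
      IndepFun η (fun ω => fun j => ξ j ω) ℙ →
      Integrable (fun ω => ((η ω : ℝ)) ^ k) ℙ →
      (∫ ω, ((η ω : ℝ)) ^ k) ≤ M →
      (∫ ω, |(∑ j ∈ Finset.range (η ω), ξ j ω)
              - (∫ ω', (η ω' : ℝ)) * (∫ ω', ξ 0 ω')| ^ k)
        ≤ C * (ℙ {ω | ξ 0 ω ≠ 0}).toReal := by
  obtain ⟨m, rfl⟩ : ∃ m, k = m + 1 := ⟨k - 1, by omega⟩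
  refine ⟨2 ^ m * (M + M ^ (m+1)), ?_⟩
  intro Ω _ _ η ξ hη hξ hval _ hid hind hint hM
  have habs : ∀ j ω, |ξ j ω| = if ξ j ω ≠ 0 then 1 else 0 := by
    intro j ω
    have h3 := hval j ω
    simp only [Set.mem_insert_iff, Set.mem_singleton_iff] at h3
    rcases h3 with h | h | h <;> simp [h]
  have hle1 : ∀ j ω, |ξ j ω| ≤ 1 := by
    intro j ω
    rw [habs]; split_ifs <;> norm_num
  set p : ℝ := (ℙ {ω | ξ 0 ω ≠ 0}).toReal with hp
  have hp0 : 0 ≤ p := ENNReal.toReal_nonneg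
  have hp1 : p ≤ 1 := by
    have := prob_le_one (μ := (ℙ : Measure Ω)) (s := {ω | ξ 0 ω ≠ 0})
    exact ENNReal.toReal_le_of_le_ofReal zero_le_one (by simpa using this)
  have hS : MeasurableSet {ω | ξ 0 ω ≠ 0} := (hξ 0) (measurableSet_singleton 0).compl
  have hB : ∫⁻ ω, ENNReal.ofReal |ξ 0 ω| = ℙ {ω | ξ 0 ω ≠ 0} := by
    rw [← lintegral_indicator_one hS]
    congr 1
    ext ω
    rw [habs]
    by_cases h : ξ 0 ω = 0 <;> simp [Set.indicator, h]
  have hEabs : |∫ ω, ξ 0 ω| ≤ p := by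
    refine (abs_integral_le_integral_abs).trans (le_of_eq ?_)
    rw [integral_eq_lintegral_of_nonneg_ae (Filter.Eventually.of_forall fun _ => abs_nonneg _)
      (measurable_norm.comp (hξ 0)).aestronglyMeasurable, hB]
  have hηm : Measurable (fun ω => (η ω : ℝ)) := (measurable_of_countable _).comp hη
  have hEη0 : 0 ≤ ∫ ω, (η ω : ℝ) := integral_nonneg fun _ => Nat.cast_nonneg _
  have hEη : ∫ ω, (η ω : ℝ) ≤ M := by
    refine le_trans (integral_mono_of_nonneg
      (Filter.Eventually.of_forall fun _ => Nat.cast_nonneg _) hint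
      (Filter.Eventually.of_forall fun ω => ?_)) hM
    show (η ω : ℝ) ≤ (η ω : ℝ) ^ (m+1)
    exact_mod_cast Nat.le_self_pow (by omega) (η ω)
  have hM0 : 0 ≤ M := hEη0.trans hEη
  obtain ⟨hHm, hH⟩ := aux_lint (m+1) hk η ξ hη hξ hid hind
  rw [hB] at hH
  have hpowE : ∫⁻ ω, (η ω : ENNReal) ^ (m+1) = ENNReal.ofReal (∫ ω, (η ω : ℝ) ^ (m+1)) := by
    rw [ofReal_integral_eq_lintegral_ofReal hint
      (Filter.Eventually.of_forall fun _ => by positivity)]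
    congr 1
    ext ω
    rw [ENNReal.ofReal_pow (Nat.cast_nonneg _), ENNReal.ofReal_natCast]
  rw [hpowE] at hH
  simp only [Nat.add_sub_cancel] at hHm hH
  have hfin : ∫⁻ ω, (η ω : ENNReal) ^ m * ∑ j ∈ Finset.range (η ω), ENNReal.ofReal |ξ j ω| ≠ ⊤ := by
    rw [hH]
    exact ENNReal.mul_ne_top ENNReal.ofReal_ne_top (measure_ne_top _ _)
  have htr : ∀ ω, ((η ω : ENNReal) ^ m * ∑ j ∈ Finset.range (η ω), ENNReal.ofReal |ξ j ω|).toReal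
      = (η ω : ℝ) ^ m * ∑ j ∈ Finset.range (η ω), |ξ j ω| := by
    intro ω
    rw [ENNReal.toReal_mul, ENNReal.toReal_pow, ENNReal.toReal_natCast,
      ENNReal.toReal_sum (fun _ _ => ENNReal.ofReal_ne_top)]
    simp [ENNReal.toReal_ofReal]
  have hI := integrable_toReal_of_lintegral_ne_top hHm.aemeasurable hfin
  have hV := integral_toReal hHm.aemeasurable (ae_lt_top hHm hfin)
  rw [hH, ENNReal.toReal_mul, ENNReal.toReal_ofReal (integral_nonneg fun _ => by positivity),
    ← hp] at hV
  simp only [htr] at hI hV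
  set c : ℝ := (∫ ω', (η ω' : ℝ)) * (∫ ω', ξ 0 ω') with hc
  have hcb : |c| ^ (m+1) ≤ M ^ (m+1) * p := by
    have h1 : |c| ≤ M * p := by
      rw [hc, abs_mul, abs_of_nonneg hEη0]
      exact mul_le_mul hEη hEabs (abs_nonneg _) hM0
    calc |c| ^ (m+1) ≤ (M * p) ^ (m+1) := pow_le_pow_left₀ (abs_nonneg _) h1 _
      _ = M ^ (m+1) * p ^ (m+1) := mul_pow _ _ _
      _ ≤ M ^ (m+1) * p := by
        gcongr
        exact pow_le_of_le_one hp0 hp1 (by omega)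
  have hpt : ∀ ω, |(∑ j ∈ Finset.range (η ω), ξ j ω) - c| ^ (m+1) ≤
      2 ^ m * ((η ω : ℝ) ^ m * (∑ j ∈ Finset.range (η ω), |ξ j ω|) + M ^ (m+1) * p) := by
    intro ω
    have h0 : 0 ≤ ∑ j ∈ Finset.range (η ω), |ξ j ω| := Finset.sum_nonneg fun _ _ => abs_nonneg _
    have h1 : |(∑ j ∈ Finset.range (η ω), ξ j ω) - c| ≤
        (∑ j ∈ Finset.range (η ω), |ξ j ω|) + |c| :=
      (abs_sub _ _).trans (by gcongr; exact Finset.abs_sum_le_sum_abs _ _)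
    have h2 : ∑ j ∈ Finset.range (η ω), |ξ j ω| ≤ η ω := by
      refine (Finset.sum_le_sum fun j _ => hle1 j ω).trans ?_
      simp
    refine (pow_le_pow_left₀ (abs_nonneg _) h1 _).trans ?_
    refine (add_pow_le h0 (abs_nonneg c) (m+1)).trans ?_
    simp only [Nat.add_sub_cancel]
    gcongr
    rw [pow_succ]
    gcongr
  calc _ ≤ ∫ ω, 2 ^ m * ((η ω : ℝ) ^ m * (∑ j ∈ Finset.range (η ω), |ξ j ω|) + M ^ (m+1) * p) :=
        integral_mono_of_nonneg (Filter.Eventually.of_forall fun _ => by positivity)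
          ((hI.add (integrable_const _)).const_mul _) (Filter.Eventually.of_forall hpt)
    _ = 2 ^ m * ((∫ ω, (η ω : ℝ) ^ (m+1)) * p + M ^ (m+1) * p) := by
        rw [integral_const_mul, integral_add hI (integrable_const _), hV]
        simp
    _ ≤ 2 ^ m * (M * p + M ^ (m+1) * p) := by gcongr
    _ = _ := by ring
end

section
/- Let k ≥ 1 be an integer and C < ∞. Then there exists a constant C' = C'(k, C) < ∞ with the following property. Let (ζ_m)_{m∈ℤ} be mutually independent nonnegative real random variables, and let (p_m)_{m∈ℤ} be nonnegative reals with Σ_{m∈ℤ} p_m ≤ 1, such that E[ζ_m^j] ≤ C · p_m for all m ∈ ℤ and all integers 1 ≤ j ≤ k. Then E[(Σ_{m∈ℤ} ζ_m)^k] ≤ C'. -/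
open MeasureTheory ProbabilityTheory

open scoped ENNReal in
/-- Recursive bound on the moments. -/
noncomputable def momB (D : ℝ≥0∞) : ℕ → ℝ≥0∞
  | 0 => 1
  | n + 1 => 2 ^ n * (D * (1 + momB D n))

open scoped ENNReal in
lemma momB_ne_top {D : ℝ≥0∞} (hD : D ≠ ⊤) (n : ℕ) : momB D n ≠ ⊤ := by
  induction n with
  | zero => simp [momB]
  | succ n ih =>
    exact ENNReal.mul_ne_top (ENNReal.pow_ne_top (by simp))
      (ENNReal.mul_ne_top hD (ENNReal.add_ne_top.2 ⟨by simp, ih⟩))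

open scoped ENNReal in
lemma add_pow_le_two_pow (a b : ℝ≥0∞) (n : ℕ) : (a + b) ^ n ≤ 2 ^ n * (a ^ n + b ^ n) := by
  rcases le_total a b with h | h
  · calc (a + b) ^ n ≤ (2 * b) ^ n := by rw [two_mul]; gcongr
      _ = 2 ^ n * b ^ n := mul_pow _ _ _
      _ ≤ _ := by gcongr; exact le_add_self
  · calc (a + b) ^ n ≤ (2 * a) ^ n := by rw [two_mul]; gcongr
      _ = 2 ^ n * a ^ n := mul_pow _ _ _
      _ ≤ _ := by gcongr; exact le_self_add

open scoped ENNReal in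
lemma finset_moment_bound {Ω : Type*} [MeasurableSpace Ω] {μ : Measure Ω} [IsProbabilityMeasure μ]
    {k : ℕ} {D : ℝ≥0∞} {f : ℤ → Ω → ℝ≥0∞} {q : ℤ → ℝ≥0∞}
    (hf : ∀ m, Measurable (f m)) (hind : iIndepFun f μ) (hq : ∑' m, q m ≤ D)
    (hm : ∀ m j, 1 ≤ j → j ≤ k → ∫⁻ ω, f m ω ^ j ∂μ ≤ q m)
    (s : Finset ℤ) (n : ℕ) (hn : n ≤ k) :
    ∫⁻ ω, (∑ m ∈ s, f m ω) ^ n ∂μ ≤ momB D n := by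
  induction n with
  | zero => simp [momB]
  | succ n ih =>
    have ih := ih (by omega)
    have key : ∀ m ∈ s, ∫⁻ ω, f m ω * (∑ i ∈ s, f i ω) ^ n ∂μ
        ≤ 2 ^ n * (q m * (1 + momB D n)) := by
      intro m hms
      have hS : Measurable (fun ω => ∑ i ∈ s.erase m, f i ω) :=
        Finset.measurable_fun_sum _ fun i _ => hf i
      have hI : IndepFun (f m) (fun ω => (∑ i ∈ s.erase m, f i ω) ^ n) μ := by
        have h1 := (hind.indepFun_finsetSum_of_notMem hf (Finset.notMem_erase m s)).symm
        have h2 := h1.comp (φ := id) (ψ := fun x : ℝ≥0∞ => x ^ n) measurable_id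
          (measurable_id.pow_const n)
        have h3 : (fun ω => (∑ i ∈ s.erase m, f i ω) ^ n)
            = (fun x : ℝ≥0∞ => x ^ n) ∘ ∑ j ∈ s.erase m, f j := by
          ext ω
          simp
        rw [h3]
        exact h2
      calc ∫⁻ ω, f m ω * (∑ i ∈ s, f i ω) ^ n ∂μ
          ≤ ∫⁻ ω, 2 ^ n * (f m ω ^ (n + 1) + f m ω * (∑ i ∈ s.erase m, f i ω) ^ n) ∂μ := by
            refine lintegral_mono fun ω => ?_
            dsimp only
            rw [← Finset.add_sum_erase s (fun i => f i ω) hms]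
            calc _ ≤ f m ω * (2 ^ n * (f m ω ^ n + (∑ i ∈ s.erase m, f i ω) ^ n)) := by
                  gcongr; exact add_pow_le_two_pow _ _ _
              _ = _ := by ring
        _ = 2 ^ n * (∫⁻ ω, f m ω ^ (n + 1) ∂μ
              + (∫⁻ ω, f m ω ∂μ) * ∫⁻ ω, (∑ i ∈ s.erase m, f i ω) ^ n ∂μ) := by
            rw [lintegral_const_mul _ (by fun_prop), lintegral_add_left (by fun_prop),
              lintegral_mul_eq_lintegral_mul_lintegral_of_indepFun'' (hf m).aemeasurable
                (by fun_prop) hI]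
        _ ≤ 2 ^ n * (q m + q m * momB D n) := by
            gcongr
            · exact hm m (n + 1) (by omega) hn
            · simpa using hm m 1 le_rfl (by omega)
            · refine le_trans (lintegral_mono fun ω => ?_) ih
              dsimp only
              gcongr
              exact Finset.erase_subset m s
        _ = _ := by ring
    calc ∫⁻ ω, (∑ m ∈ s, f m ω) ^ (n + 1) ∂μ
        = ∑ m ∈ s, ∫⁻ ω, f m ω * (∑ i ∈ s, f i ω) ^ n ∂μ := by
          rw [← lintegral_finsetSum _ (fun m _ => by fun_prop)]
          simp_rw [← Finset.sum_mul, pow_succ']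
      _ ≤ ∑ m ∈ s, 2 ^ n * (q m * (1 + momB D n)) := Finset.sum_le_sum key
      _ = 2 ^ n * ((∑ m ∈ s, q m) * (1 + momB D n)) := by
          rw [← Finset.mul_sum, Finset.sum_mul]
      _ ≤ momB D (n + 1) := by
          rw [momB]
          gcongr
          exact (ENNReal.sum_le_tsum s).trans hq

/-- Lemma 4.10 (abstract form): for every integer `k ≥ 1` and `C < ∞` there is a
constant `C' = C'(k, C)` such that for any mutually independent nonnegative
random variables `(ζ_m)_{m ∈ ℤ}` and nonnegative reals `(p_m)` with
`Σ p_m ≤ 1` and `E[ζ_m^j] ≤ C·p_m` for all `1 ≤ j ≤ k`, one has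
`E[(Σ_m ζ_m)^k] ≤ C'`; in particular `Σ_m ζ_m` is a.s. finite. -/
theorem moment_bound_independent_sum (k : ℕ) (hk : 1 ≤ k) (C : ℝ) :
    ∃ C' : ℝ, ∀ (Ω : Type) [MeasureSpace Ω] [IsProbabilityMeasure (ℙ : Measure Ω)]
      (ζ : ℤ → Ω → ℝ) (p : ℤ → ℝ),
      (∀ m, Measurable (ζ m)) →
      (∀ m ω, 0 ≤ ζ m ω) →
      iIndepFun ζ ℙ →
      (∀ m, 0 ≤ p m) →
      Summable p →
      (∑' m : ℤ, p m) ≤ 1 →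
      (∀ m : ℤ, ∀ j : ℕ, 1 ≤ j → j ≤ k →
        Integrable (fun ω => (ζ m ω) ^ j) ℙ ∧ (∫ ω, (ζ m ω) ^ j) ≤ C * p m) →
      (∫⁻ ω, (∑' m : ℤ, ENNReal.ofReal (ζ m ω)) ^ k) ≤ ENNReal.ofReal C' := by
  refine ⟨(momB (ENNReal.ofReal C) k).toReal, ?_⟩
  intro Ω _ _ ζ p hmeas hnn hind hp hps hp1 hmom
  rw [ENNReal.ofReal_toReal (momB_ne_top ENNReal.ofReal_ne_top k)]
  have hf : ∀ m, Measurable (fun ω => ENNReal.ofReal (ζ m ω)) := fun m => (hmeas m).ennreal_ofReal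
  have hind' : iIndepFun (fun m ω => ENNReal.ofReal (ζ m ω)) (ℙ : Measure Ω) :=
    hind.comp (fun _ => ENNReal.ofReal) fun _ => ENNReal.measurable_ofReal
  have hq : ∑' m, ENNReal.ofReal C * ENNReal.ofReal (p m) ≤ ENNReal.ofReal C := by
    rw [ENNReal.tsum_mul_left, ← ENNReal.ofReal_tsum_of_nonneg hp hps]
    calc _ ≤ ENNReal.ofReal C * 1 := by
          gcongr
          exact ENNReal.ofReal_le_one.2 hp1
      _ = _ := mul_one _
  have hm : ∀ m j, 1 ≤ j → j ≤ k → ∫⁻ ω, ENNReal.ofReal (ζ m ω) ^ j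
      ≤ ENNReal.ofReal C * ENNReal.ofReal (p m) := by
    intro m j h1 h2
    obtain ⟨hi, hle⟩ := hmom m j h1 h2
    rw [← ENNReal.ofReal_mul' (hp m)]
    simp_rw [← ENNReal.ofReal_pow (hnn m _)]
    rw [← ofReal_integral_eq_lintegral_ofReal hi (ae_of_all _ fun ω => pow_nonneg (hnn m ω) j)]
    exact ENNReal.ofReal_le_ofReal hle
  simp_rw [ENNReal.tsum_eq_iSup_sum, ENNReal.iSup_pow]
  rw [lintegral_iSup_directed (fun s => by fun_prop)]
  · exact iSup_le fun s => finset_moment_bound hf hind' hq hm s k le_rfl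
  · refine Monotone.directed_le fun s t hst ω => ?_
    dsimp only
    gcongr
end

section
/- Let p be a probability mass function on ℤ such that Σ_{x∈ℤ} e^{θx} p(x) < ∞ for all |θ| ≤ δ, for some δ > 0, and let b = Σ_{x∈ℤ} x·p(x). For s > 0, let X_s = Σ_{i=1}^{N} ξ_i, where N is a Poisson random variable with mean s, independent of the i.i.d. sequence (ξ_i)_{i≥1} with common distribution p. Then there exist constants α > 0 and K > 0 such that for all s > 0 and all u ≥ 0: P(X_s ≤ s(b − u)) ≤ exp(−sKu²) if 0 ≤ u ≤ α, and P(X_s ≤ s(b − u)) ≤ exp(−sKu) if u ≥ α. -/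
open MeasureTheory ProbabilityTheory

lemma cp_exp_taylor (y : ℝ) : Real.exp y ≤ 1 + y + y ^ 2 * Real.exp |y| := by
  have h := Complex.norm_exp_sub_sum_le_norm_mul_exp (y : ℂ) 2
  have e : Complex.exp y - ∑ m ∈ Finset.range 2, (y : ℂ) ^ m / m.factorial
      = ((Real.exp y - (1 + y) : ℝ) : ℂ) := by
    simp [Finset.sum_range_succ]
  rw [e, Complex.norm_real, Complex.norm_real, Real.norm_eq_abs, Real.norm_eq_abs, sq_abs] at h
  linarith [le_abs_self (Real.exp y - (1 + y))]

lemma cp_exp_abs (z : ℝ) : Real.exp |z| ≤ Real.exp z + Real.exp (-z) := by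
  rcases abs_cases z with ⟨h, _⟩ | ⟨h, _⟩ <;> rw [h] <;>
    linarith [Real.exp_pos z, Real.exp_pos (-z)]

/-- pointwise second order bound -/
lemma cp_pointwise (δ : ℝ) (hδ : 0 < δ) (θ : ℝ) (h0 : 0 ≤ θ) (h1 : θ ≤ δ / 2) (x : ℝ) :
    Real.exp (-θ * x) ≤ 1 - θ * x
      + θ ^ 2 * (8 / δ ^ 2 * (Real.exp (δ * x) + Real.exp (-δ * x))) := by
  have h := cp_exp_taylor (-θ * x)
  have hA : |-θ * x| ≤ δ / 2 * |x| := by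
    rw [abs_mul, abs_neg, abs_of_nonneg h0]
    gcongr
  have hB : Real.exp |-θ * x| ≤ Real.exp (δ / 2 * |x|) := Real.exp_le_exp.2 hA
  have hC : (δ / 2 * |x|) ^ 2 / 2 ≤ Real.exp (δ / 2 * |x|) := by
    have := Real.pow_div_factorial_le_exp (x := δ / 2 * |x|) (by positivity) 2
    simpa using this
  have hx2 : x ^ 2 ≤ 8 / δ ^ 2 * Real.exp (δ / 2 * |x|) := by
    rw [mul_pow, sq_abs] at hC
    rw [div_mul_eq_mul_div, le_div_iff₀ (by positivity)]
    nlinarith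
  have hD : Real.exp (δ / 2 * |x|) * Real.exp (δ / 2 * |x|)
      ≤ Real.exp (δ * x) + Real.exp (-δ * x) := by
    have := cp_exp_abs (δ * x)
    rw [← Real.exp_add]
    rw [abs_mul, abs_of_pos hδ] at this
    convert this using 2 <;> ring_nf
  have : (-θ * x) ^ 2 * Real.exp |-θ * x|
      ≤ θ ^ 2 * (8 / δ ^ 2 * (Real.exp (δ * x) + Real.exp (-δ * x))) := by
    calc (-θ * x) ^ 2 * Real.exp |-θ * x|
        ≤ (-θ * x) ^ 2 * Real.exp (δ / 2 * |x|) := by gcongr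
      _ = θ ^ 2 * (x ^ 2 * Real.exp (δ / 2 * |x|)) := by ring
      _ ≤ θ ^ 2 * ((8 / δ ^ 2 * Real.exp (δ / 2 * |x|)) * Real.exp (δ / 2 * |x|)) := by gcongr
      _ = θ ^ 2 * (8 / δ ^ 2 * (Real.exp (δ / 2 * |x|) * Real.exp (δ / 2 * |x|))) := by ring
      _ ≤ _ := by gcongr
  linarith

lemma cp_moment
    (p : ℤ → ℝ) (hp0 : ∀ x, 0 ≤ p x) (hpsum : Summable p) (hp1 : (∑' x : ℤ, p x) = 1)
    (δ : ℝ) (hδ : 0 < δ)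
    (hexp : ∀ θ : ℝ, |θ| ≤ δ → Summable fun x : ℤ => Real.exp (θ * x) * p x) :
    ∃ C : ℝ, 0 < C ∧ ∀ θ : ℝ, 0 ≤ θ → θ ≤ δ / 2 →
      (∑' x : ℤ, Real.exp (-θ * x) * p x) ≤ 1 - θ * (∑' x : ℤ, (x : ℝ) * p x) + C * θ ^ 2 := by
  have hs1 := hexp δ (by rw [abs_of_pos hδ])
  have hs2 := hexp (-δ) (by rw [abs_neg, abs_of_pos hδ])
  have hs := hs1.add hs2
  set g : ℤ → ℝ := fun x => Real.exp (δ * x) * p x + Real.exp (-δ * x) * p x with hg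
  have hg0 : ∀ x, 0 ≤ g x := fun x => by
    have := hp0 x
    simp only [hg]; positivity
  have hxp : Summable fun x : ℤ => (x : ℝ) * p x := by
    refine Summable.of_norm_bounded (hs.mul_left (1 / δ)) fun x => ?_
    rw [Real.norm_eq_abs, abs_mul, abs_of_nonneg (hp0 x)]
    have h1 := cp_exp_abs (δ * x)
    have h2 := Real.add_one_le_exp |δ * x|
    rw [abs_mul, abs_of_pos hδ] at h1 h2
    have h3 : |(x : ℝ)| ≤ 1 / δ * (Real.exp (δ * x) + Real.exp (-δ * x)) := by
      rw [div_mul_eq_mul_div, le_div_iff₀ hδ]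
      rw [← neg_mul] at h1
      linarith
    calc |(x : ℝ)| * p x ≤ (1 / δ * (Real.exp (δ * x) + Real.exp (-δ * x))) * p x :=
          mul_le_mul_of_nonneg_right h3 (hp0 x)
      _ = _ := by ring
  have hT : 0 ≤ ∑' x, g x := tsum_nonneg hg0
  refine ⟨8 / δ ^ 2 * (∑' x, g x) + 1, by positivity, fun θ h0 h1 => ?_⟩
  have hsθ := hexp (-θ) (by rw [abs_neg, abs_of_nonneg h0]; linarith)
  have hR : HasSum (fun x : ℤ => p x - θ * ((x : ℝ) * p x) + θ ^ 2 * (8 / δ ^ 2) * g x)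
      (1 - θ * (∑' x : ℤ, (x : ℝ) * p x) + θ ^ 2 * (8 / δ ^ 2) * ∑' x, g x) := by
    have a := hpsum.hasSum
    rw [hp1] at a
    exact (a.sub (hxp.hasSum.mul_left θ)).add (hs.hasSum.mul_left _)
  have := hasSum_le (fun x : ℤ => ?_) hsθ.hasSum hR
  · nlinarith [sq_nonneg θ]
  · have h := mul_le_mul_of_nonneg_right (cp_pointwise δ hδ θ h0 h1 x) (hp0 x)
    refine h.trans (le_of_eq ?_)
    simp only [hg]; ring

lemma cp_lintegral (p : ℤ → ℝ) (hp0 : ∀ x, 0 ≤ p x) {Ω : Type} [MeasurableSpace Ω]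
    (μ : Measure Ω) (X : Ω → ℤ) (hX : Measurable X)
    (hl : ∀ x, μ {ω | X ω = x} = ENNReal.ofReal (p x)) (t : ℝ)
    (hs : Summable fun x : ℤ => Real.exp (t * x) * p x) :
    Integrable (fun ω => Real.exp (t * (X ω : ℝ))) μ ∧
      mgf (fun ω => (X ω : ℝ)) μ t = ∑' x : ℤ, Real.exp (t * x) * p x := by
  have hm : Measurable (fun ω => Real.exp (t * (X ω : ℝ))) :=
    (measurable_from_top (f := fun x : ℤ => Real.exp (t * (x : ℝ)))).comp hX
  have key : ∫⁻ ω, ENNReal.ofReal (Real.exp (t * (X ω : ℝ))) ∂μ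
      = ENNReal.ofReal (∑' x : ℤ, Real.exp (t * x) * p x) := by
    rw [← lintegral_map (f := fun x : ℤ => ENNReal.ofReal (Real.exp (t * (x : ℝ))))
      measurable_from_top hX, lintegral_countable', ENNReal.ofReal_tsum_of_nonneg _ hs]
    · refine tsum_congr fun x => ?_
      rw [Measure.map_apply hX (measurableSet_singleton x), ENNReal.ofReal_mul (Real.exp_pos _).le,
        ← hl x]
      rfl
    · intro x
      have := hp0 x
      positivity
  constructor
  · refine ⟨hm.aestronglyMeasurable, ?_⟩
    rw [hasFiniteIntegral_iff_ofReal (Filter.Eventually.of_forall fun _ => (Real.exp_pos _).le), key]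
    exact ENNReal.ofReal_lt_top
  · rw [mgf, integral_eq_lintegral_of_nonneg_ae
      (Filter.Eventually.of_forall fun _ => (Real.exp_pos _).le) hm.aestronglyMeasurable, key]
    refine ENNReal.toReal_ofReal (tsum_nonneg fun x => ?_)
    have := hp0 x
    positivity

lemma cp_chernoff (p : ℤ → ℝ) (hp0 : ∀ x, 0 ≤ p x) (s : ℝ) (hs : 0 < s)
    (Ω : Type) [MeasureSpace Ω] [IsProbabilityMeasure (ℙ : Measure Ω)]
    (N : Ω → ℕ) (ξ : ℕ → Ω → ℤ) (hξ : ∀ i, Measurable (ξ i))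
    (hNl : ∀ k : ℕ, ℙ {ω | N ω = k}
          = ENNReal.ofReal (Real.exp (-s) * s ^ k / (Nat.factorial k)))
    (hl : ∀ i x, ℙ {ω | ξ i ω = x} = ENNReal.ofReal (p x))
    (hind : iIndepFun ξ ℙ) (hNi : IndepFun N (fun ω => fun i => ξ i ω) ℙ)
    (θ : ℝ) (hθ : 0 ≤ θ) (hsum : Summable fun x : ℤ => Real.exp (-θ * x) * p x) (a : ℝ) :
    ℙ {ω | ((∑ i ∈ Finset.range (N ω), ξ i ω : ℤ) : ℝ) ≤ a}
      ≤ ENNReal.ofReal (Real.exp (θ * a + s * ((∑' x : ℤ, Real.exp (-θ * x) * p x) - 1))) := by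
  set M := ∑' x : ℤ, Real.exp (-θ * x) * p x with hM
  have hM0 : 0 ≤ M := tsum_nonneg fun x => by
    have := hp0 x
    positivity
  have hXm : ∀ i, Measurable (fun ω => (ξ i ω : ℝ)) := fun i =>
    (measurable_from_top (f := fun x : ℤ => (x : ℝ))).comp (hξ i)
  have hindR : iIndepFun (fun i ω => (ξ i ω : ℝ)) ℙ :=
    hind.comp (fun _ => fun x : ℤ => (x : ℝ)) (fun _ => measurable_from_top)
  have hk : ∀ k : ℕ, ℙ {ω | ((∑ i ∈ Finset.range k, ξ i ω : ℤ) : ℝ) ≤ a}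
      ≤ ENNReal.ofReal (Real.exp (θ * a) * M ^ k) := by
    intro k
    have h := measure_le_le_exp_mul_mgf (μ := (ℙ : Measure Ω)) (t := -θ) a (by linarith)
      (hindR.integrable_exp_mul_sum hXm (s := Finset.range k)
        (fun i _ => (cp_lintegral p hp0 ℙ (ξ i) (hξ i) (hl i) (-θ) hsum).1))
    rw [hindR.mgf_sum hXm, Finset.prod_congr rfl
      (fun i _ => (cp_lintegral p hp0 ℙ (ξ i) (hξ i) (hl i) (-θ) hsum).2),
      Finset.prod_const, Finset.card_range, neg_neg] at h
    rw [← ENNReal.ofReal_toReal (measure_ne_top ℙ {ω | ((∑ i ∈ Finset.range k, ξ i ω : ℤ) : ℝ) ≤ a})]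
    refine ENNReal.ofReal_le_ofReal ?_
    convert h using 1
    simp [Measure.real]
  have hterm : ∀ k : ℕ, ℙ ({ω | N ω = k} ∩ {ω | ((∑ i ∈ Finset.range k, ξ i ω : ℤ) : ℝ) ≤ a})
      ≤ ENNReal.ofReal (Real.exp (θ * a) * Real.exp (-s) * ((s * M) ^ k / k.factorial)) := by
    intro k
    have hmeas : MeasurableSet {f : ℕ → ℤ | ((∑ i ∈ Finset.range k, f i : ℤ) : ℝ) ≤ a} := by
      have : Measurable fun f : ℕ → ℤ => ∑ i ∈ Finset.range k, f i :=
        Finset.measurable_sum _ fun i _ => measurable_pi_apply i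
      exact this (MeasurableSet.of_discrete (s := {z : ℤ | (z : ℝ) ≤ a}))
    have h := hNi.measure_inter_preimage_eq_mul {k}
      {f : ℕ → ℤ | ((∑ i ∈ Finset.range k, f i : ℤ) : ℝ) ≤ a} (measurableSet_singleton k) hmeas
    have h' : ℙ ({ω | N ω = k} ∩ {ω | ((∑ i ∈ Finset.range k, ξ i ω : ℤ) : ℝ) ≤ a})
      = ℙ {ω | N ω = k} * ℙ {ω | ((∑ i ∈ Finset.range k, ξ i ω : ℤ) : ℝ) ≤ a} := h
    rw [h', hNl]
    refine (mul_le_mul_right (hk k) _).trans ?_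
    rw [← ENNReal.ofReal_mul (by positivity)]
    refine ENNReal.ofReal_le_ofReal (le_of_eq ?_)
    rw [mul_pow]; ring
  have hsumE : HasSum (fun k : ℕ => (s * M) ^ k / k.factorial) (Real.exp (s * M)) := by
    rw [Real.exp_eq_exp_ℝ]
    exact NormedSpace.expSeries_div_hasSum_exp (s * M)
  have hsub : {ω | ((∑ i ∈ Finset.range (N ω), ξ i ω : ℤ) : ℝ) ≤ a}
      ⊆ ⋃ k : ℕ, ({ω | N ω = k} ∩ {ω | ((∑ i ∈ Finset.range k, ξ i ω : ℤ) : ℝ) ≤ a}) := by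
    intro ω hω
    exact Set.mem_iUnion.2 ⟨N ω, rfl, hω⟩
  refine (measure_mono hsub).trans ((measure_iUnion_le _).trans
    ((ENNReal.tsum_le_tsum hterm).trans (le_of_eq ?_)))
  have hS := hsumE.mul_left (Real.exp (θ * a) * Real.exp (-s))
  rw [← ENNReal.ofReal_tsum_of_nonneg (fun k => by positivity) hS.summable, hS.tsum_eq,
    ← Real.exp_add, ← Real.exp_add]
  congr 2; ring

/-- The large deviation bounds (4.16)–(4.17): if the jump distribution `p` on `ℤ`
has finite exponential moments for `|θ| ≤ δ` and mean `b = Σ x·p(x)`, then there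
are constants `α > 0` and `K > 0` such that for every `s > 0`, the compound
Poisson variable `X_s = Σ_{i=1}^N ξ_i` (with `N ~ Poisson(s)` independent of the
i.i.d. sequence `(ξ_i)` with distribution `p`) satisfies
`P(X_s ≤ s(b − u)) ≤ exp(−sKu²)` for `0 ≤ u ≤ α` and
`P(X_s ≤ s(b − u)) ≤ exp(−sKu)` for `u ≥ α`. -/
theorem compound_poisson_lower_tail_bound
    (p : ℤ → ℝ) (hp0 : ∀ x, 0 ≤ p x) (hpsum : Summable p) (hp1 : (∑' x : ℤ, p x) = 1)
    (δ : ℝ) (hδ : 0 < δ)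
    (hexp : ∀ θ : ℝ, |θ| ≤ δ → Summable fun x : ℤ => Real.exp (θ * x) * p x) :
    ∃ α : ℝ, 0 < α ∧ ∃ K : ℝ, 0 < K ∧
      ∀ (s : ℝ), 0 < s →
      ∀ (Ω : Type) [MeasureSpace Ω] [IsProbabilityMeasure (ℙ : Measure Ω)]
        (N : Ω → ℕ) (ξ : ℕ → Ω → ℤ),
        Measurable N → (∀ i, Measurable (ξ i)) →
        (∀ k : ℕ, ℙ {ω | N ω = k}
          = ENNReal.ofReal (Real.exp (-s) * s ^ k / (Nat.factorial k))) →
        (∀ i x, ℙ {ω | ξ i ω = x} = ENNReal.ofReal (p x)) →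
        iIndepFun ξ ℙ →
        IndepFun N (fun ω => fun i => ξ i ω) ℙ →
        ∀ u : ℝ, 0 ≤ u →
          (u ≤ α →
            ℙ {ω | ((∑ i ∈ Finset.range (N ω), ξ i ω : ℤ) : ℝ)
                  ≤ s * ((∑' x : ℤ, (x : ℝ) * p x) - u)}
              ≤ ENNReal.ofReal (Real.exp (-(s * K * u ^ 2)))) ∧
          (α ≤ u →
            ℙ {ω | ((∑ i ∈ Finset.range (N ω), ξ i ω : ℤ) : ℝ)
                  ≤ s * ((∑' x : ℤ, (x : ℝ) * p x) - u)}
              ≤ ENNReal.ofReal (Real.exp (-(s * K * u)))) := by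
  obtain ⟨C, hC, hCb⟩ := cp_moment p hp0 hpsum hp1 δ hδ hexp
  refine ⟨C * δ, by positivity, min (1 / (4 * C)) (δ / 4), by positivity, ?_⟩
  intro s hs Ω _ _ N ξ _ hξ hNl hl hind hNi u hu
  have main : ∀ θ : ℝ, 0 ≤ θ → θ ≤ δ / 2 → ∀ E : ℝ, E ≤ θ * u - C * θ ^ 2 →
      ℙ {ω | ((∑ i ∈ Finset.range (N ω), ξ i ω : ℤ) : ℝ)
                  ≤ s * ((∑' x : ℤ, (x : ℝ) * p x) - u)}
              ≤ ENNReal.ofReal (Real.exp (-(s * E))) := by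
    intro θ h0 h1 E hE
    refine (cp_chernoff p hp0 s hs Ω N ξ hξ hNl hl hind hNi θ h0
      (hexp _ (by rw [abs_neg, abs_of_nonneg h0]; linarith)) _).trans ?_
    refine ENNReal.ofReal_le_ofReal (Real.exp_le_exp.2 ?_)
    have h2 := mul_le_mul_of_nonneg_left (hCb θ h0 h1) hs.le
    have h3 := mul_le_mul_of_nonneg_left hE hs.le
    nlinarith
  constructor
  · intro hua
    rw [mul_assoc s]
    have hθ : u / (2 * C) ≤ δ / 2 := by
      rw [div_le_iff₀ (by positivity)]
      linarith
    refine main (u / (2 * C)) (by positivity) hθ _ ?_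
    calc min (1 / (4 * C)) (δ / 4) * u ^ 2 ≤ 1 / (4 * C) * u ^ 2 := by
          gcongr
          exact min_le_left _ _
      _ = u / (2 * C) * u - C * (u / (2 * C)) ^ 2 := by
          field_simp
          ring
  · intro hua
    rw [mul_assoc s]
    refine main (δ / 2) (by positivity) le_rfl _ ?_
    calc min (1 / (4 * C)) (δ / 4) * u ≤ δ / 4 * u := by
          gcongr
          exact min_le_right _ _
      _ ≤ δ / 2 * u - C * (δ / 2) ^ 2 := by nlinarith
end

section
/- There is a universal constant c < ∞ with the following property. Let n ≥ 1 be an integer, a, b > 0, and C ≥ 1, C₁ ≥ 0 constants. Let (X_i)_{i≥1} be mutually independent nonnegative real random variables with E[X_i] ≤ C − 1 and Var[X_i] ≤ C₁ for all i. Then P( there exist integers ℓ and k with 1 ≤ ℓ ≤ an and n^{2/3} ≤ k ≤ bn such that Σ_{i=ℓ}^{ℓ+k−1} X_i ≥ 3Ck ) ≤ c · C₁ (a + b + 1) n^{−1/3}. -/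
open MeasureTheory ProbabilityTheory


lemma block_sum_aux (f : ℕ → ℝ) (m j0 d : ℕ) :
    ∑ i ∈ Finset.Ico (m * j0) (m * (j0 + d)), f i
      = ∑ j ∈ Finset.Ico j0 (j0 + d), ∑ i ∈ Finset.Ico (m * j) (m * (j + 1)), f i := by
  induction d with
  | zero => simp
  | succ d ih =>
    rw [← add_assoc, Finset.sum_Ico_succ_top (by omega), ← ih,
      Finset.sum_Ico_consecutive _ (Nat.mul_le_mul_left _ (by omega))
        (Nat.mul_le_mul_left _ (by omega))]

lemma exists_block (f : ℕ → ℝ) (hf : ∀ i, 0 ≤ f i) (m l k : ℕ) (C : ℝ) (hm : 1 ≤ m)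
    (hk : m ≤ k) (hC : 1 ≤ C) (h : 3 * C * k ≤ ∑ i ∈ Finset.Ico l (l + k), f i) :
    ∃ j, j ≤ (l + k - 1) / m ∧ C * m ≤ ∑ i ∈ Finset.Ico (m * j) (m * (j + 1)), f i := by
  by_contra! hcon
  obtain ⟨d, hd⟩ : ∃ d, (l + k - 1) / m + 1 = l / m + d :=
    Nat.exists_eq_add_of_le (Nat.le_succ_of_le (Nat.div_le_div_right (by omega)))
  have e1 := Nat.div_add_mod l m
  have e2 := Nat.div_add_mod (l + k - 1) m
  have r1 := Nat.mod_lt l (show m > 0 by omega)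
  have r2 := Nat.mod_lt (l + k - 1) (show m > 0 by omega)
  have hmul : m * ((l + k - 1) / m) + m = m * (l / m) + m * d := by
    rw [← mul_add, ← hd]; ring
  have hsub : Finset.Ico l (l + k) ⊆ Finset.Ico (m * (l / m)) (m * (l / m + d)) := by
    apply Finset.Ico_subset_Ico
    · omega
    · rw [mul_add]; omega
  have h1 := Finset.sum_le_sum_of_subset_of_nonneg hsub (f := f) (fun i _ _ => hf i)
  rw [block_sum_aux] at h1
  have h2 : ∑ j ∈ Finset.Ico (l / m) (l / m + d), ∑ i ∈ Finset.Ico (m * j) (m * (j + 1)), f i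
      ≤ ∑ j ∈ Finset.Ico (l / m) (l / m + d), C * m := by
    apply Finset.sum_le_sum
    intro j hj
    rw [Finset.mem_Ico] at hj
    exact (hcon j (by omega)).le
  simp only [Finset.sum_const, Nat.card_Ico, add_tsub_cancel_left, nsmul_eq_mul] at h2
  have h3 : m * d < 3 * k := by omega
  have h4 : (m : ℝ) * d < 3 * k := by exact_mod_cast h3
  nlinarith

lemma block_prob {Ω : Type} [MeasureSpace Ω] [IsProbabilityMeasure (ℙ : Measure Ω)]
    (C C₁ : ℝ) (X : ℕ → Ω → ℝ) (hind : iIndepFun X ℙ) (hL : ∀ i, MemLp (X i) 2 ℙ)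
    (hE : ∀ i, (∫ ω, X i ω) ≤ C - 1) (hV : ∀ i, variance (X i) ℙ ≤ C₁) (m j : ℕ) (hm : 1 ≤ m) :
    ℙ {ω | C * m ≤ ∑ i ∈ Finset.Ico (m * j) (m * (j + 1)), X i ω} ≤ ENNReal.ofReal (C₁ / m) := by
  set s := Finset.Ico (m * j) (m * (j + 1)) with hs
  have hcard : s.card = m := by rw [hs, Nat.card_Ico, mul_add]; omega
  have hm0 : (0 : ℝ) < m := by exact_mod_cast hm
  have hmem : MemLp (∑ i ∈ s, X i) 2 ℙ := memLp_finsetSum' s (fun i _ => hL i)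
  have hvar : variance (∑ i ∈ s, X i) ℙ ≤ m * C₁ := by
    rw [IndepFun.variance_sum (fun i _ => hL i) (fun i _ k _ hik => hind.indepFun hik)]
    calc _ ≤ ∑ i ∈ s, C₁ := Finset.sum_le_sum (fun i _ => hV i)
      _ = _ := by simp [hcard]
  have hexp : ∫ ω, (∑ i ∈ s, X i) ω ≤ m * (C - 1) := by
    simp only [Finset.sum_apply]
    rw [integral_finsetSum s (fun i _ => (hL i).integrable (by norm_num))]
    calc _ ≤ ∑ i ∈ s, (C - 1) := Finset.sum_le_sum (fun i _ => hE i)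
      _ = _ := by rw [Finset.sum_const, hcard, nsmul_eq_mul]
  refine le_trans (measure_mono ?_) ((meas_ge_le_variance_div_sq hmem hm0).trans ?_)
  · intro ω hω
    simp only [Set.mem_ofPred_eq] at hω ⊢
    refine le_trans ?_ (le_abs_self _)
    rw [Finset.sum_apply]
    linarith
  · apply ENNReal.ofReal_le_ofReal
    rw [div_le_div_iff₀ (by positivity) hm0]
    nlinarith

/-- The maximal inequality (5.9): there is a universal constant `c` such that
for mutually independent nonnegative random variables `(X_i)` with
`E[X_i] ≤ C − 1` and `Var[X_i] ≤ C₁`,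
`P(∃ ℓ, k with 1 ≤ ℓ ≤ an, n^{2/3} ≤ k ≤ bn and Σ_{i=ℓ}^{ℓ+k−1} X_i ≥ 3Ck)
  ≤ c·C₁(a + b + 1)n^{−1/3}`. -/
theorem maximal_block_sum_bound :
    ∃ c : ℝ, ∀ (Ω : Type) [MeasureSpace Ω] [IsProbabilityMeasure (ℙ : Measure Ω)]
      (n : ℕ), 1 ≤ n → ∀ (a b C C₁ : ℝ), 0 < a → 0 < b → 1 ≤ C → 0 ≤ C₁ →
      ∀ (X : ℕ → Ω → ℝ),
      (∀ i, Measurable (X i)) →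
      (∀ i ω, 0 ≤ X i ω) →
      iIndepFun X ℙ →
      (∀ i, MemLp (X i) 2 ℙ) →
      (∀ i, (∫ ω, X i ω) ≤ C - 1) →
      (∀ i, variance (X i) ℙ ≤ C₁) →
      ℙ {ω | ∃ ℓ k : ℕ, 1 ≤ ℓ ∧ (ℓ : ℝ) ≤ a * n ∧
            (n : ℝ) ^ ((2 : ℝ) / 3) ≤ (k : ℝ) ∧ (k : ℝ) ≤ b * n ∧
            3 * C * k ≤ ∑ i ∈ Finset.Ico ℓ (ℓ + k), X i ω}
        ≤ ENNReal.ofReal (c * C₁ * (a + b + 1) * (n : ℝ) ^ (-(1 : ℝ) / 3)) := by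
  refine ⟨1, ?_⟩
  intro Ω _ _ n hn a b C C₁ ha hb hC hC₁ X hmeas hpos hind hL hE hV
  have hn0 : (0 : ℝ) < n := by exact_mod_cast hn
  have hn1 : (1 : ℝ) ≤ n := by exact_mod_cast hn
  set p : ℝ := (n : ℝ) ^ ((2 : ℝ) / 3) with hp
  have hp1 : 1 ≤ p := Real.one_le_rpow hn1 (by norm_num)
  set m := ⌈p⌉₊ with hmdef
  have hpm : p ≤ m := Nat.le_ceil p
  have hm : 1 ≤ m := by exact_mod_cast hp1.trans hpm
  set J := ⌊(a + b) * n⌋₊ / m + 1 with hJ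
  have hsub : {ω | ∃ ℓ k : ℕ, 1 ≤ ℓ ∧ (ℓ : ℝ) ≤ a * n ∧ p ≤ (k : ℝ) ∧ (k : ℝ) ≤ b * n ∧
            3 * C * k ≤ ∑ i ∈ Finset.Ico ℓ (ℓ + k), X i ω} ⊆
      ⋃ j ∈ Finset.range J, {ω | C * m ≤ ∑ i ∈ Finset.Ico (m * j) (m * (j + 1)), X i ω} := by
    rintro ω ⟨l, k, hl, hla, hk, hkb, h⟩
    obtain ⟨j, hj, hj'⟩ := exists_block (fun i => X i ω) (fun i => hpos i ω) m l k C hm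
      (Nat.ceil_le.2 hk) hC h
    simp only [Set.mem_iUnion, Finset.mem_range]
    refine ⟨j, ?_, hj'⟩
    have : l + k ≤ ⌊(a + b) * n⌋₊ := Nat.le_floor (by push_cast; linarith)
    exact Nat.lt_succ_of_le (hj.trans (Nat.div_le_div_right (by omega)))
  refine (measure_mono hsub).trans ((measure_biUnion_finset_le _ _).trans ?_)
  refine (Finset.sum_le_sum (fun j _ => block_prob C C₁ X hind hL hE hV m j hm)).trans ?_
  rw [Finset.sum_const, Finset.card_range, ← ENNReal.ofReal_nsmul]
  apply ENNReal.ofReal_le_ofReal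
  rw [nsmul_eq_mul]
  have hm0 : (0 : ℝ) < m := by exact_mod_cast hm
  have hp0 : 0 < p := by linarith
  set q : ℝ := (n : ℝ) ^ (-(1 : ℝ) / 3) with hq
  have hq0 : 0 < q := Real.rpow_pos_of_pos hn0 _
  have hpq : p * q * p = n := by
    rw [hp, hq, ← Real.rpow_add hn0, ← Real.rpow_add hn0]; norm_num
  have hpq1 : 1 ≤ p * q := by
    rw [hp, hq, ← Real.rpow_add hn0]; exact Real.one_le_rpow hn1 (by norm_num)
  have hJr : (J : ℝ) ≤ (a + b) * n / m + 1 := by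
    rw [hJ]; push_cast
    gcongr
    refine Nat.cast_div_le.trans ?_
    gcongr
    exact Nat.floor_le (by positivity)
  have hJ2 : (J : ℝ) / m ≤ (a + b + 1) * q := by
    have h1 : (J : ℝ) ≤ (a + b) * n / p + 1 := hJr.trans (by gcongr)
    have h2 : (a + b) * n / p = (a + b) * (p * q) := by
      rw [← hpq]; field_simp
    rw [h2] at h1
    calc (J : ℝ) / m ≤ J / p := by gcongr
      _ ≤ _ := by rw [div_le_iff₀ hp0]; nlinarith
  calc (J : ℝ) * (C₁ / m) = C₁ * (J / m) := by ring
    _ ≤ C₁ * ((a + b + 1) * q) := by gcongr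
    _ = _ := by ring
end
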